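/- For all a, c ∈ ℂ, every δ with 0 < δ < 1, and every r > 0, one has (1/2π) ∫₀^{2π} log⁺ | 1 + c/(re^{iθ} − a) | dθ ≤ |c|^δ / ( δ(1−δ) r^δ ). -/

import Mathlib

open MeasureTheory Filter Topology Metric

noncomputable section

/-- Positive part of the logarithm: `log⁺ x = max (log x) 0`. -/
def logPlus (x : ℝ) : ℝ := max (Real.log x) 0

/-- The point `r e^{iθ}` on the circle of radius `r`. -/
def circ (r θ : ℝ) : ℂ := (r : ℂ) * Complex.exp (θ * Complex.I)

/-- Nevanlinna proximity function `m(r, f)`. -/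
def nevm (f : ℂ → ℂ) (r : ℝ) : ℝ :=
  (2 * Real.pi)⁻¹ * ∫ θ in (0:ℝ)..(2 * Real.pi), logPlus ‖f (circ r θ)‖

/-- Order of the pole of `f` at `x` (`0` if `f` extends analytically over `x`);
determined through the punctured neighbourhood of `x`. -/
def poleOrd (f : ℂ → ℂ) (x : ℂ) : ℕ :=
  sInf {n : ℕ | ∃ g : ℂ → ℂ, AnalyticAt ℂ g x ∧
    ∀ᶠ w in 𝓝[≠] x, (w - x) ^ n * f w = g w}

/-- Unintegrated counting function `n(r, f)`: number of poles of `f` in `|z| ≤ r`,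
counted with multiplicity. -/
def nevn (f : ℂ → ℂ) (r : ℝ) : ℕ := ∑ᶠ z ∈ closedBall (0:ℂ) r, poleOrd f z

/-- Integrated counting function `N(r, f)`. -/
def nevN (f : ℂ → ℂ) (r : ℝ) : ℝ :=
  (∫ t in (0:ℝ)..r, ((nevn f t : ℝ) - (nevn f 0 : ℝ)) / t) + (nevn f 0 : ℝ) * Real.log r

/-- Nevanlinna characteristic `T(r, f) = m(r, f) + N(r, f)`. -/
def nevT (f : ℂ → ℂ) (r : ℝ) : ℝ := nevm f r + nevN f r

/-- A subset of `(0, ∞)` has finite logarithmic measure: `∫_E dr/r < ∞`. -/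
def FinLogMeasure (E : Set ℝ) : Prop :=
  E ⊆ Set.Ioi 0 ∧ ∫⁻ r in E, ENNReal.ofReal r⁻¹ < ⊤

/-- `f` is a non-constant function. -/
def Nonconstant (f : ℂ → ℂ) : Prop := ¬ ∃ a : ℂ, ∀ z : ℂ, f z = a

/-- `f` has finite order: `limsup_{r→∞} log T(r,f) / log r < ∞`. -/
def FiniteOrder (f : ℂ → ℂ) : Prop :=
  IsBoundedUnder (· ≤ ·) atTop fun r : ℝ => Real.log (nevT f r) / Real.log r

end

/-!
For `0 < δ < 1`, subadditivity of `t ↦ t ^ δ` gives `log⁺ ‖1 + w‖ ≤ ‖w‖ ^ δ / δ`, so it suffices to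
bound the mean of `‖z - a‖ ^ (-δ)` over the circle. The distance from `r e^{iθ}` to `a` is at least
its distance `r |sin (θ - arg a)|` to the line through `0` and `a`. By Jordan's inequality
`|sin x| ≥ 2 |x| / π` for `|x| ≤ π / 2`, the mean of `|sin| ^ (-δ)` is at most `1 / (1 - δ)`.
-/

open Real

section PosLog

variable {δ : ℝ}

theorem log_one_add_le_rpow_div {x : ℝ} (hx : 0 ≤ x) (hδ0 : 0 < δ) (hδ1 : δ ≤ 1) :
    log (1 + x) ≤ x ^ δ / δ := by
  rw [le_div_iff₀' hδ0, ← log_rpow (by linarith)]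
  calc log ((1 + x) ^ δ) ≤ log (1 + x ^ δ) := by
        gcongr
        simpa using rpow_add_le_add_rpow zero_le_one hx hδ0.le hδ1
    _ ≤ x ^ δ := by linarith [log_le_sub_one_of_pos (show 0 < 1 + x ^ δ by positivity)]

theorem posLog_norm_one_add_le_rpow_div {A : Type*} [SeminormedRing A] [NormOneClass A] (w : A)
    (hδ0 : 0 < δ) (hδ1 : δ ≤ 1) : log⁺ ‖1 + w‖ ≤ ‖w‖ ^ δ / δ :=
  calc log⁺ ‖1 + w‖ ≤ log⁺ (1 + ‖w‖) :=
        posLog_le_posLog (norm_nonneg _) (by simpa using norm_add_le 1 w)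
    _ = log (1 + ‖w‖) :=
        posLog_eq_log ((le_add_of_nonneg_right (norm_nonneg w)).trans (le_abs_self _))
    _ ≤ ‖w‖ ^ δ / δ := log_one_add_le_rpow_div (norm_nonneg w) hδ0 hδ1

theorem circleAverage_posLog_norm_one_add_le {A : Type*} [SeminormedRing A] [NormOneClass A]
    {f : ℂ → A} {c : ℂ} {R : ℝ} (hlog : CircleIntegrable (fun z ↦ log⁺ ‖1 + f z‖) c R)
    (hf : CircleIntegrable (fun z ↦ ‖f z‖ ^ δ) c R) (hδ0 : 0 < δ) (hδ1 : δ ≤ 1) :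
    circleAverage (fun z ↦ log⁺ ‖1 + f z‖) c R ≤ δ⁻¹ * circleAverage (fun z ↦ ‖f z‖ ^ δ) c R := by
  rw [← smul_eq_mul, ← circleAverage_fun_smul]
  refine circleAverage_mono hlog hf.const_smul fun z _ ↦ ?_
  rw [smul_eq_mul, ← div_eq_inv_mul]
  exact posLog_norm_one_add_le_rpow_div (f z) hδ0 hδ1

end PosLog

section AbsRpow

variable {p : ℝ}

theorem intervalIntegrable_abs_rpow (hp : -1 < p) (a b : ℝ) :
    IntervalIntegrable (fun x : ℝ ↦ |x| ^ p) volume a b := by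
  refine intervalIntegrable_of_even (fun x ↦ by rw [abs_neg]) fun x hx ↦ ?_
  refine (intervalIntegral.intervalIntegrable_rpow' hp).congr fun y hy ↦ ?_
  rw [Set.uIoc_of_le hx.le] at hy
  simp only [abs_of_pos hy.1]

theorem integral_abs_rpow_symm (hp : -1 < p) {a : ℝ} (ha : 0 ≤ a) :
    ∫ x in -a..a, |x| ^ p = 2 * (a ^ (p + 1) / (p + 1)) := by
  have right : ∫ x in 0..a, |x| ^ p = a ^ (p + 1) / (p + 1) := by
    have abs_eq : Set.EqOn (fun x : ℝ ↦ |x| ^ p) (fun x ↦ x ^ p) (Set.uIcc 0 a) := fun x hx ↦ by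
      rw [Set.uIcc_of_le ha] at hx
      simp only [abs_of_nonneg hx.1]
    rw [intervalIntegral.integral_congr abs_eq, integral_rpow (Or.inl hp),
      zero_rpow (by linarith), sub_zero]
  have left : ∫ x in -a..0, |x| ^ p = ∫ x in 0..a, |x| ^ p := by
    simpa using (intervalIntegral.integral_comp_neg (a := 0) (b := a) fun x : ℝ ↦ |x| ^ p).symm
  rw [← intervalIntegral.integral_add_adjacent_intervals (intervalIntegrable_abs_rpow hp (-a) 0)
    (intervalIntegrable_abs_rpow hp 0 a), left, right, two_mul]

end AbsRpow

section AbsSinRpow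

variable {δ : ℝ}

theorem ae_sin_sub_ne_zero (α : ℝ) : ∀ᵐ θ : ℝ, sin (θ - α) ≠ 0 := by
  have countable_zeros : (Set.range fun n : ℤ ↦ n * π + α).Countable := Set.countable_range _
  filter_upwards [countable_zeros.ae_notMem volume] with θ hθ hsin
  obtain ⟨n, hn⟩ := sin_eq_zero_iff.1 hsin
  exact hθ ⟨n, by linarith⟩

theorem abs_sin_rpow_neg_le {x : ℝ} (hδ : 0 ≤ δ) (hx : |x| ≤ π / 2) :
    |sin x| ^ (-δ) ≤ (π / 2) ^ δ * |x| ^ (-δ) :=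
  calc |sin x| ^ (-δ) ≤ (2 / π * |x|) ^ (-δ) := by
        rcases eq_or_ne x 0 with rfl | hx0
        · simp
        · exact rpow_le_rpow_of_nonpos (by positivity) (mul_abs_le_abs_sin hx) (by linarith)
    _ = (π / 2) ^ δ * |x| ^ (-δ) := by
        rw [mul_rpow (by positivity) (abs_nonneg x), rpow_neg (by positivity),
          ← inv_rpow (by positivity), inv_div]

theorem periodic_abs_sin_rpow (p : ℝ) : Function.Periodic (fun x ↦ |sin x| ^ p) π := fun x ↦ by
  simp only [sin_add_pi, abs_neg]

theorem intervalIntegrable_abs_sin_rpow_neg (hδ0 : 0 ≤ δ) (hδ1 : δ < 1) (a b : ℝ) :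
    IntervalIntegrable (fun x ↦ |sin x| ^ (-δ)) volume a b := by
  refine (periodic_abs_sin_rpow (-δ)).intervalIntegrable (t := -(π / 2)) pi_ne_zero ?_ a b
  have majorant := (intervalIntegrable_abs_rpow (show -1 < -δ by linarith)
    (-(π / 2)) (-(π / 2) + π)).const_mul ((π / 2) ^ δ)
  refine majorant.mono_fun' (Measurable.aestronglyMeasurable (by fun_prop)) ?_
  refine (ae_restrict_iff' measurableSet_uIoc).2 (.of_forall fun x hx ↦ ?_)
  rw [Set.uIoc_of_le (by linarith [pi_pos])] at hx
  exact (norm_of_nonneg (by positivity)).trans_le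
    (abs_sin_rpow_neg_le hδ0 (abs_le.2 ⟨hx.1.le, by linarith [hx.2]⟩))

theorem intervalIntegrable_abs_sin_sub_rpow_neg (hδ0 : 0 ≤ δ) (hδ1 : δ < 1) (α a b : ℝ) :
    IntervalIntegrable (fun θ ↦ |sin (θ - α)| ^ (-δ)) volume a b := by
  simpa using (intervalIntegrable_abs_sin_rpow_neg hδ0 hδ1 (a - α) (b - α)).comp_sub_right α

theorem integral_abs_sin_rpow_neg_le (hδ0 : 0 ≤ δ) (hδ1 : δ < 1) :
    ∫ x in -(π / 2)..π / 2, |sin x| ^ (-δ) ≤ π / (1 - δ) :=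
  calc ∫ x in -(π / 2)..π / 2, |sin x| ^ (-δ)
      ≤ ∫ x in -(π / 2)..π / 2, (π / 2) ^ δ * |x| ^ (-δ) :=
        intervalIntegral.integral_mono_on (by linarith [pi_pos])
          (intervalIntegrable_abs_sin_rpow_neg hδ0 hδ1 _ _)
          ((intervalIntegrable_abs_rpow (by linarith) _ _).const_mul _)
          fun x hx ↦ abs_sin_rpow_neg_le hδ0 (abs_le.2 hx)
    _ = (π / 2) ^ δ * (2 * ((π / 2) ^ (-δ + 1) / (-δ + 1))) := by
        rw [intervalIntegral.integral_const_mul,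
          integral_abs_rpow_symm (by linarith) pi_div_two_pos.le]
    _ = 2 * ((π / 2) ^ (δ + (-δ + 1)) / (-δ + 1)) := by
        rw [rpow_add pi_div_two_pos δ]
        ring
    _ = π / (1 - δ) := by
        rw [add_neg_cancel_left, rpow_one, neg_add_eq_sub]
        ring

theorem integral_abs_sin_rpow_neg_add_two_pi_le (hδ0 : 0 ≤ δ) (hδ1 : δ < 1) (t : ℝ) :
    ∫ x in t..t + 2 * π, |sin x| ^ (-δ) ≤ 2 * π / (1 - δ) := by
  have two_periods := (periodic_abs_sin_rpow (-δ)).intervalIntegral_add_zsmul_eq 2 t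
    (intervalIntegrable_abs_sin_rpow_neg hδ0 hδ1)
  have center := (periodic_abs_sin_rpow (-δ)).intervalIntegral_add_eq t (-(π / 2))
  rw [show -(π / 2) + π = π / 2 by ring] at center
  simp only [zsmul_eq_mul, Int.cast_ofNat] at two_periods
  rw [two_periods, center, mul_div_assoc]
  gcongr
  exact integral_abs_sin_rpow_neg_le hδ0 hδ1

end AbsSinRpow

section Circle

variable {δ R : ℝ} (c a : ℂ)

theorem abs_mul_abs_sin_le_norm_circleMap_sub (R θ : ℝ) :
    |R| * |sin (θ - (a - c).arg)| ≤ ‖circleMap c R θ - a‖ := by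
  set α := (a - c).arg
  have rotate : circleMap c R θ - a =
      Complex.exp (α * Complex.I) * (circleMap 0 R (θ - α) - (‖a - c‖ : ℝ)) := by
    have polar : (‖a - c‖ : ℂ) * Complex.exp (α * Complex.I) = a - c :=
      Complex.norm_mul_exp_arg_mul_I (a - c)
    have exp_add : Complex.exp (α * Complex.I) * Complex.exp ((θ - α : ℝ) * Complex.I) =
        Complex.exp (θ * Complex.I) := by
      rw [← Complex.exp_add]
      push_cast
      ring_nf
    rw [circleMap, circleMap_zero]
    linear_combination polar - (R : ℂ) * exp_add
  calc |R| * |sin (θ - α)| = |(circleMap 0 R (θ - α) - (‖a - c‖ : ℝ)).im| := by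
        rw [Complex.sub_im, Complex.ofReal_im, sub_zero, circleMap_zero, Complex.im_ofReal_mul,
          Complex.exp_ofReal_mul_I_im, abs_mul]
    _ ≤ ‖circleMap 0 R (θ - α) - (‖a - c‖ : ℝ)‖ := Complex.abs_im_le_norm _
    _ = ‖circleMap c R θ - a‖ := by
        rw [rotate, norm_mul, Complex.norm_exp_ofReal_mul_I, one_mul]

-- Only almost everywhere: where the sine vanishes, `0 ^ (-δ) = 0` on the right for `δ ≠ 0`.
theorem ae_norm_circleMap_sub_rpow_neg_le (hδ : 0 ≤ δ) (hR : R ≠ 0) :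
    ∀ᵐ θ : ℝ, ‖circleMap c R θ - a‖ ^ (-δ) ≤ |R| ^ (-δ) * |sin (θ - (a - c).arg)| ^ (-δ) := by
  filter_upwards [ae_sin_sub_ne_zero (a - c).arg] with θ hθ
  rw [← mul_rpow (abs_nonneg R) (abs_nonneg _)]
  exact rpow_le_rpow_of_nonpos (by positivity) (abs_mul_abs_sin_le_norm_circleMap_sub c a R θ)
    (by linarith)

theorem circleIntegrable_norm_sub_rpow_neg (hδ0 : 0 ≤ δ) (hδ1 : δ < 1) :
    CircleIntegrable (fun z ↦ ‖z - a‖ ^ (-δ)) c R := by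
  rcases eq_or_ne R 0 with rfl | hR
  · exact circleIntegrable_zero_radius
  refine ((intervalIntegrable_abs_sin_sub_rpow_neg hδ0 hδ1 (a - c).arg 0 (2 * π)).const_mul
    (|R| ^ (-δ))).mono_fun' (Measurable.aestronglyMeasurable (by fun_prop)) ?_
  filter_upwards [ae_restrict_of_ae (ae_norm_circleMap_sub_rpow_neg_le c a hδ0 hR)] with θ hθ
  rwa [norm_of_nonneg (by positivity)]

theorem circleAverage_norm_sub_rpow_neg_le (hδ0 : 0 ≤ δ) (hδ1 : δ < 1) (hR : R ≠ 0) :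
    circleAverage (fun z ↦ ‖z - a‖ ^ (-δ)) c R ≤ |R| ^ (-δ) / (1 - δ) := by
  set α := (a - c).arg
  have integral_le : ∫ θ in 0..2 * π, ‖circleMap c R θ - a‖ ^ (-δ) ≤
      |R| ^ (-δ) * (2 * π / (1 - δ)) :=
    calc ∫ θ in 0..2 * π, ‖circleMap c R θ - a‖ ^ (-δ)
        ≤ ∫ θ in 0..2 * π, |R| ^ (-δ) * |sin (θ - α)| ^ (-δ) :=
          intervalIntegral.integral_mono_ae two_pi_pos.le
            (circleIntegrable_norm_sub_rpow_neg c a hδ0 hδ1)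
            ((intervalIntegrable_abs_sin_sub_rpow_neg hδ0 hδ1 α _ _).const_mul _)
            (ae_norm_circleMap_sub_rpow_neg_le c a hδ0 hR)
      _ = |R| ^ (-δ) * ∫ x in -α..-α + 2 * π, |sin x| ^ (-δ) := by
          rw [intervalIntegral.integral_const_mul,
            intervalIntegral.integral_comp_sub_right (fun x ↦ |sin x| ^ (-δ)) α, zero_sub,
            sub_eq_neg_add]
      _ ≤ |R| ^ (-δ) * (2 * π / (1 - δ)) := by
          gcongr
          exact integral_abs_sin_rpow_neg_add_two_pi_le hδ0 hδ1 (-α)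
  rw [circleAverage_def, smul_eq_mul, inv_mul_le_iff₀ two_pi_pos]
  exact integral_le.trans_eq (by ring)

end Circle

theorem norm_div_rpow {𝕜 : Type*} [NormedDivisionRing 𝕜] (x y : 𝕜) (p : ℝ) :
    ‖x / y‖ ^ p = ‖x‖ ^ p * ‖y‖ ^ (-p) := by
  rw [norm_div, div_rpow (norm_nonneg x) (norm_nonneg y), rpow_neg (norm_nonneg y), div_eq_mul_inv]

theorem nevm_eq_circleAverage_posLog (f : ℂ → ℂ) (r : ℝ) :
    nevm f r = circleAverage (fun z ↦ log⁺ ‖f z‖) 0 r := by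
  simp only [nevm, circleAverage_def, smul_eq_mul, logPlus, posLog_apply, max_comm, circ,
    circleMap_zero]

/-- For all `a, c ∈ ℂ`, `0 < δ < 1` and `r > 0`:
`(1/2π) ∫₀^{2π} log⁺|1 + c/(re^{iθ} − a)| dθ ≤ |c|^δ / (δ(1−δ) r^δ)`. -/
theorem circle_integral_logPlus_bound (a c : ℂ) (δ r : ℝ) (hδ0 : 0 < δ) (hδ1 : δ < 1)
    (hr : 0 < r) :
    (2 * Real.pi)⁻¹ * ∫ θ in (0:ℝ)..(2 * Real.pi), logPlus ‖1 + c / (circ r θ - a)‖ ≤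
      ‖c‖ ^ δ / (δ * (1 - δ) * r ^ δ) := by
  have hlog : CircleIntegrable (fun z ↦ log⁺ ‖1 + c / (z - a)‖) 0 r :=
    MeromorphicOn.circleIntegrable_posLog_norm (f := fun z ↦ 1 + c / (z - a)) fun z _ ↦ by
      fun_prop
  have hpow : CircleIntegrable (fun z ↦ ‖c / (z - a)‖ ^ δ) 0 r := by
    simp_rw [norm_div_rpow]
    exact (circleIntegrable_norm_sub_rpow_neg 0 a hδ0.le hδ1).const_smul
  calc nevm (fun z ↦ 1 + c / (z - a)) r
      = circleAverage (fun z ↦ log⁺ ‖1 + c / (z - a)‖) 0 r := nevm_eq_circleAverage_posLog _ r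
    _ ≤ δ⁻¹ * circleAverage (fun z ↦ ‖c / (z - a)‖ ^ δ) 0 r :=
        circleAverage_posLog_norm_one_add_le hlog hpow hδ0 hδ1.le
    _ = δ⁻¹ * (‖c‖ ^ δ * circleAverage (fun z ↦ ‖z - a‖ ^ (-δ)) 0 r) := by
        simp_rw [norm_div_rpow, ← smul_eq_mul, circleAverage_fun_smul]
    _ ≤ δ⁻¹ * (‖c‖ ^ δ * (|r| ^ (-δ) / (1 - δ))) := by
        gcongr
        exact circleAverage_norm_sub_rpow_neg_le 0 a hδ0.le hδ1 hr.ne'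
    _ = ‖c‖ ^ δ / (δ * (1 - δ) * r ^ δ) := by
        rw [abs_of_pos hr, rpow_neg hr.le]
        field_simp
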